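/- arXiv:1607.08711 — 3 statements merged into one kernel-verified Lean document; each statement's English description precedes it below -/
import Mathlib

section
/- Let β ∈ (1/2,1), ε ∈ (0,β), δ > 0, K > 0, and let g : (0,δ] → ℂ be continuous satisfying: (i) |g(b)| ≤ K b^{−β} for all b ∈ (0,δ]; and (ii) |g(b+h) − g(b)| ≤ K (b^{−2β} h^{β} + b^{−β} h^{β−ε}) whenever 0 < h < b and b + h ≤ δ. Then there exists C > 0, depending only on β, ε, δ, K, such that for all a > π and all t ≥ 1 with t > (a+π)/δ, one has |∫_{a/t}^{δ} e^{ibt} g(b) db| ≤ C ( t^{−(1−β)} a^{−(2β−1)} + t^{−(β−ε)} ). -/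
open MeasureTheory Real

/-!
Translating by half a period `π / t` changes the sign of `exp (I * b * t)`, so twice the oscillatory
integral of `g` equals two boundary integrals of length `π / t` minus the oscillatory integral of
the increments `g (b + π / t) - g b`. On `[a / t, δ]` the pointwise bound on `g` controls the
boundary terms. As `2 * β > 1`, the integral of `b ^ (-(2 * β))` is governed by the lower endpoint
`a / t` and yields the gain in `a`; as `β < 1`, that of `b ^ (-β)` is bounded.
-/

section OscillatoryIntegral

variable {E : Type*} [NormedAddCommGroup E] [NormedSpace ℂ E] {g : ℝ → E} {x y t : ℝ}

lemma norm_exp_I_mul_mul_smul (b t : ℝ) (v : E) :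
    ‖Complex.exp (Complex.I * (b : ℂ) * (t : ℂ)) • v‖ = ‖v‖ := by
  simp [norm_smul, Complex.norm_exp]

lemma exp_I_mul_add_pi_div_mul (b : ℝ) (ht : t ≠ 0) :
    Complex.exp (Complex.I * ((b + π / t : ℝ) : ℂ) * (t : ℂ)) =
      -Complex.exp (Complex.I * (b : ℂ) * (t : ℂ)) := by
  have ht' : (t : ℂ) ≠ 0 := by exact_mod_cast ht
  have hphase : Complex.I * ((b + π / t : ℝ) : ℂ) * (t : ℂ) =
      Complex.I * (b : ℂ) * (t : ℂ) + π * Complex.I := by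
    push_cast
    field_simp
  rw [hphase, Complex.exp_add_pi_mul_I]

lemma intervalIntegrable_exp_smul (hg : IntervalIntegrable g volume x y) (t : ℝ) :
    IntervalIntegrable (fun b : ℝ => Complex.exp (Complex.I * (b : ℂ) * (t : ℂ)) • g b)
      volume x y :=
  hg.continuousOn_smul (by fun_prop)

lemma two_smul_integral_exp_smul_eq (ht : 0 < t) (hxy : x + π / t ≤ y)
    (hg : IntervalIntegrable g volume x y) :
    (2 : ℂ) • ∫ b in x..y, Complex.exp (Complex.I * (b : ℂ) * (t : ℂ)) • g b =
      (∫ b in x..x + π / t, Complex.exp (Complex.I * (b : ℂ) * (t : ℂ)) • g b) +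
      (∫ b in (y - π / t)..y, Complex.exp (Complex.I * (b : ℂ) * (t : ℂ)) • g b) -
      ∫ b in x..(y - π / t),
        Complex.exp (Complex.I * (b : ℂ) * (t : ℂ)) • (g (b + π / t) - g b) := by
  have hh : 0 < π / t := by positivity
  set h := π / t
  set F : ℝ → E := fun b => Complex.exp (Complex.I * (b : ℂ) * (t : ℂ)) • g b
  have hF {p q : ℝ} (hp : x ≤ p) (hpq : p ≤ q) (hq : q ≤ y) : IntervalIntegrable F volume p q :=
    (intervalIntegrable_exp_smul hg t).mono_set <| by
      rw [Set.uIcc_of_le hpq, Set.uIcc_of_le (hp.trans (hpq.trans hq))]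
      exact Set.Icc_subset_Icc hp hq
  have hleft : IntervalIntegrable F volume x (y - h) := hF le_rfl (by linarith) (by linarith)
  have hright : IntervalIntegrable F volume (x + h) y := hF (by linarith) hxy le_rfl
  have hright_shift : IntervalIntegrable (fun b => F (b + h)) volume x (y - h) := by
    simpa only [add_sub_cancel_right] using hright.comp_add_right h
  have hincr (b : ℝ) :
      Complex.exp (Complex.I * (b : ℂ) * (t : ℂ)) • (g (b + h) - g b) = -(F (b + h) + F b) := by
    simp only [F, h, exp_I_mul_add_pi_div_mul b ht.ne']
    module
  have hincr_integral :
      ∫ b in x..(y - h), Complex.exp (Complex.I * (b : ℂ) * (t : ℂ)) • (g (b + h) - g b) =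
        -((∫ b in (x + h)..y, F b) + ∫ b in x..(y - h), F b) := by
    simp only [hincr]
    rw [intervalIntegral.integral_neg, intervalIntegral.integral_add hright_shift hleft,
      intervalIntegral.integral_comp_add_right, sub_add_cancel]
  have hsplit_left := intervalIntegral.integral_add_adjacent_intervals
    (hF le_rfl (by linarith) hxy) hright
  have hsplit_right := intervalIntegral.integral_add_adjacent_intervals
    hleft (hF (by linarith) (by linarith) le_rfl)
  rw [hincr_integral, two_smul]
  nth_rewrite 1 [← hsplit_left]
  rw [← hsplit_right]
  abel

lemma norm_integral_exp_smul_le {M : ℝ} {φ : ℝ → ℝ} (ht : 0 < t) (hxy : x + π / t ≤ y)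
    (hg : IntervalIntegrable g volume x y) (hM : ∀ b ∈ Set.Ioc x y, ‖g b‖ ≤ M)
    (hφ : IntervalIntegrable φ volume x (y - π / t))
    (hgφ : ∀ b ∈ Set.Ioc x (y - π / t), ‖g (b + π / t) - g b‖ ≤ φ b) :
    ‖∫ b in x..y, Complex.exp (Complex.I * (b : ℂ) * (t : ℂ)) • g b‖ ≤
      M * (π / t) + (∫ b in x..(y - π / t), φ b) / 2 := by
  have hh : 0 < π / t := by positivity
  have hboundary {p q : ℝ} (hp : x ≤ p) (hq : q ≤ y) (hpq : q - p = π / t) :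
      ‖∫ b in p..q, Complex.exp (Complex.I * (b : ℂ) * (t : ℂ)) • g b‖ ≤ M * (π / t) := by
    have hle : p ≤ q := by linarith
    rw [← hpq, ← abs_of_nonneg (sub_nonneg.2 hle)]
    refine intervalIntegral.norm_integral_le_of_norm_le_const fun b hb => ?_
    rw [Set.uIoc_of_le hle] at hb
    rw [norm_exp_I_mul_mul_smul]
    exact hM b ⟨hp.trans_lt hb.1, hb.2.trans hq⟩
  have hleft := hboundary le_rfl hxy (add_sub_cancel_left _ _)
  have hright := hboundary (by linarith) le_rfl (sub_sub_cancel _ _)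
  have hincr : ‖∫ b in x..(y - π / t),
      Complex.exp (Complex.I * (b : ℂ) * (t : ℂ)) • (g (b + π / t) - g b)‖ ≤
        ∫ b in x..(y - π / t), φ b := by
    refine intervalIntegral.norm_integral_le_of_norm_le (by linarith)
      (Filter.Eventually.of_forall fun b hb => ?_) hφ
    rw [norm_exp_I_mul_mul_smul]
    exact hgφ b hb
  have htwo := norm_sub_le_of_le (norm_add_le_of_le hleft hright) hincr
  rw [← two_smul_integral_exp_smul_eq ht hxy hg, norm_smul, Complex.norm_ofNat] at htwo
  linarith

end OscillatoryIntegral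

section Rpow

variable {r x y : ℝ}

lemma integral_rpow_le_of_lt_neg_one (hr : r < -1) (hx : 0 < x) (hxy : x ≤ y) :
    ∫ b in x..y, b ^ r ≤ -x ^ (r + 1) / (r + 1) := by
  rw [integral_rpow (Or.inr ⟨hr.ne, Set.notMem_uIcc_of_lt hx (hx.trans_le hxy)⟩)]
  have hy : 0 ≤ y ^ (r + 1) := rpow_nonneg (hx.le.trans hxy) _
  exact div_le_div_of_nonpos_of_le (by linarith) (by linarith)

lemma integral_rpow_le_of_neg_one_lt (hr : -1 < r) (hx : 0 ≤ x) :
    ∫ b in x..y, b ^ r ≤ y ^ (r + 1) / (r + 1) := by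
  rw [integral_rpow (Or.inl hr)]
  exact div_le_div_of_nonneg_right (sub_le_self _ (rpow_nonneg hx _)) (by linarith)

lemma div_rpow_mul_div_rpow {a c t : ℝ} (ha : 0 ≤ a) (hc : 0 ≤ c) (ht : 0 < t) (r s : ℝ) :
    (a / t) ^ r * (c / t) ^ s = c ^ s * (t ^ (-(r + s)) * a ^ r) := by
  rw [div_rpow ha ht.le, div_rpow hc ht.le, rpow_neg ht.le, rpow_add ht]
  field_simp

end Rpow

section PowerBounds

variable {E : Type*} [NormedAddCommGroup E] {g : ℝ → E} {β γ δ K : ℝ}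

lemma intervalIntegrable_of_norm_le_rpow (hβ : β < 1) (hδ : 0 ≤ δ)
    (hgm : AEStronglyMeasurable g (volume.restrict (Set.Ioc 0 δ)))
    (hg : ∀ b ∈ Set.Ioc (0 : ℝ) δ, ‖g b‖ ≤ K * b ^ (-β)) :
    IntervalIntegrable g volume 0 δ := by
  have hmajorant : IntervalIntegrable (fun b : ℝ => K * b ^ (-β)) volume 0 δ :=
    (intervalIntegral.intervalIntegrable_rpow' (by linarith)).const_mul K
  rw [intervalIntegrable_iff_integrableOn_Ioc_of_le hδ] at hmajorant ⊢
  exact hmajorant.mono' hgm (ae_restrict_of_forall_mem measurableSet_Ioc hg)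

lemma norm_integral_exp_smul_le_of_rpow_bounds [NormedSpace ℂ E] {x t : ℝ}
    (hβ : β ∈ Set.Ioo (1 / 2 : ℝ) 1) (hK : 0 ≤ K) (ht : 0 < t) (hx : π / t ≤ x)
    (hxδ : x + π / t ≤ δ) (hgm : AEStronglyMeasurable g (volume.restrict (Set.Ioc 0 δ)))
    (hg : ∀ b ∈ Set.Ioc (0 : ℝ) δ, ‖g b‖ ≤ K * b ^ (-β))
    (hincr : ∀ b h : ℝ, 0 < h → h < b → b + h ≤ δ →
      ‖g (b + h) - g b‖ ≤ K * (b ^ (-(2 * β)) * h ^ β + b ^ (-β) * h ^ γ)) :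
    ‖∫ b in x..δ, Complex.exp (Complex.I * (b : ℂ) * (t : ℂ)) • g b‖ ≤
      K * (x ^ (-β) * (π / t)) +
        K * (x ^ (1 - 2 * β) * (π / t) ^ β / (2 * β - 1) +
          δ ^ (1 - β) / (1 - β) * (π / t) ^ γ) / 2 := by
  obtain ⟨hβ_half, hβ_one⟩ := hβ
  have hh : 0 < π / t := by positivity
  set h := π / t
  have hx0 : 0 < x := hh.trans_le hx
  have hxδh : x ≤ δ - h := by linarith
  have hgi : IntervalIntegrable g volume x δ :=
    (intervalIntegrable_of_norm_le_rpow hβ_one (by linarith) hgm hg).mono_set <| by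
      rw [Set.uIcc_of_le (by linarith), Set.uIcc_of_le (by linarith)]
      exact Set.Icc_subset_Icc_left hx0.le
  have hM : ∀ b ∈ Set.Ioc x δ, ‖g b‖ ≤ K * x ^ (-β) := fun b hb =>
    (hg b ⟨hx0.trans hb.1, hb.2⟩).trans <| mul_le_mul_of_nonneg_left
      (rpow_le_rpow_of_nonpos hx0 hb.1.le (by linarith)) hK
  have hrpow (r : ℝ) : IntervalIntegrable (fun b : ℝ => b ^ r) volume x (δ - h) :=
    intervalIntegral.intervalIntegrable_rpow
      (Or.inr (Set.notMem_uIcc_of_lt hx0 (hx0.trans_le hxδh)))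
  have hφ₁ := (hrpow (-(2 * β))).mul_const (h ^ β)
  have hφ₂ := (hrpow (-β)).mul_const (h ^ γ)
  have hsingular : ∫ b in x..(δ - h), b ^ (-(2 * β)) ≤ x ^ (1 - 2 * β) / (2 * β - 1) := by
    refine (integral_rpow_le_of_lt_neg_one (by linarith) hx0 hxδh).trans_eq ?_
    rw [neg_add_eq_sub, ← neg_sub (2 * β) 1, neg_div_neg_eq]
  have hregular : ∫ b in x..(δ - h), b ^ (-β) ≤ δ ^ (1 - β) / (1 - β) := by
    refine (integral_rpow_le_of_neg_one_lt (by linarith) hx0.le).trans ?_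
    rw [neg_add_eq_sub]
    exact div_le_div_of_nonneg_right
      (rpow_le_rpow (by linarith) (by linarith) (by linarith)) (by linarith)
  refine (norm_integral_exp_smul_le ht hxδ hgi hM ((hφ₁.add hφ₂).const_mul K)
    fun b hb => hincr b h hh (hx.trans_lt hb.1) (by linarith [hb.2])).trans ?_
  rw [intervalIntegral.integral_const_mul, intervalIntegral.integral_add hφ₁ hφ₂,
    intervalIntegral.integral_mul_const, intervalIntegral.integral_mul_const, mul_assoc K,
    mul_div_right_comm (x ^ (1 - 2 * β))]
  gcongr

end PowerBounds

theorem stmt2_general {E : Type*} [NormedAddCommGroup E] [NormedSpace ℂ E] [CompleteSpace E]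
    (β γ δ K : ℝ) (hβ : β ∈ Set.Ioo (1 / 2 : ℝ) 1) (hδ : 0 < δ) (hK : 0 < K) :
    ∃ C : ℝ, 0 < C ∧
      ∀ g : ℝ → E, AEStronglyMeasurable g (volume.restrict (Set.Ioc 0 δ)) →
      (∀ b ∈ Set.Ioc (0 : ℝ) δ, ‖g b‖ ≤ K * b ^ (-β)) →
      (∀ b h : ℝ, 0 < h → h < b → b + h ≤ δ →
        ‖g (b + h) - g b‖ ≤ K * (b ^ (-(2 * β)) * h ^ β + b ^ (-β) * h ^ γ)) →
      ∀ a t : ℝ, π ≤ a → (a + π) / δ ≤ t →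
        ‖∫ b in (a / t)..δ, Complex.exp (Complex.I * (b : ℂ) * (t : ℂ)) • g b‖ ≤
          C * (t ^ (-(1 - β)) * a ^ (-(2 * β - 1)) + t ^ (-γ)) := by
  have hβ_half : 0 < 2 * β - 1 := by linarith [hβ.1]
  have hβ_one : 0 < 1 - β := by linarith [hβ.2]
  set A := K * π + K * π ^ β / (2 * β - 1) / 2 with hA
  set B := K * (δ ^ (1 - β) / (1 - β)) * π ^ γ / 2 with hB
  refine ⟨A + B, by positivity, fun g hgm hg hincr a t ha hat => ?_⟩
  have ha0 : 0 < a := pi_pos.trans_le ha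
  have ht : 0 < t := lt_of_lt_of_le (by positivity) hat
  have hxδ : a / t + π / t ≤ δ := by rwa [← add_div, div_le_comm₀ ht hδ]
  have hboundary : (a / t) ^ (-β) * (π / t) ≤ π * (t ^ (-(1 - β)) * a ^ (-(2 * β - 1))) := by
    have hscale := div_rpow_mul_div_rpow ha0.le pi_pos.le ht (-β) 1
    rw [rpow_one, rpow_one, neg_add_eq_sub] at hscale
    rw [hscale]
    gcongr <;> linarith [pi_gt_three]
  have hsingular : (a / t) ^ (1 - 2 * β) * (π / t) ^ β =
      π ^ β * (t ^ (-(1 - β)) * a ^ (-(2 * β - 1))) := by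
    rw [div_rpow_mul_div_rpow ha0.le pi_pos.le ht, neg_sub (2 * β),
      show 1 - 2 * β + β = 1 - β by ring]
  have hregular : (π / t) ^ γ = π ^ γ * t ^ (-γ) := by
    rw [div_rpow pi_pos.le ht.le, rpow_neg ht.le, div_eq_mul_inv]
  have hbound := norm_integral_exp_smul_le_of_rpow_bounds hβ hK.le ht
    (div_le_div_of_nonneg_right ha ht.le) hxδ hgm hg hincr
  rw [hsingular, hregular] at hbound
  set P := t ^ (-(1 - β)) * a ^ (-(2 * β - 1))
  set Q := t ^ (-γ)
  calc _ ≤ K * (π * P) + K * (π ^ β * P / (2 * β - 1) +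
          δ ^ (1 - β) / (1 - β) * (π ^ γ * Q)) / 2 := hbound.trans (by gcongr)
    _ = A * P + B * Q := by rw [hA, hB]; ring
    _ ≤ (A + B) * P + (A + B) * Q := by
      gcongr
      · exact le_add_of_nonneg_right (by positivity)
      · exact le_add_of_nonneg_left (by positivity)
    _ = (A + B) * (P + Q) := by ring

theorem stmt2 (β ε δ K : ℝ) (hβ : β ∈ Set.Ioo (1/2 : ℝ) 1) (hε : ε ∈ Set.Ioo 0 β)
    (hδ : 0 < δ) (hK : 0 < K) :
    ∃ C : ℝ, 0 < C ∧
      ∀ g : ℝ → ℂ, ContinuousOn g (Set.Ioc 0 δ) →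
      (∀ b ∈ Set.Ioc (0:ℝ) δ, ‖g b‖ ≤ K * b ^ (-β)) →
      (∀ b h : ℝ, 0 < h → h < b → b + h ≤ δ →
        ‖g (b + h) - g b‖ ≤ K * (b ^ (-(2*β)) * h ^ β + b ^ (-β) * h ^ (β - ε))) →
      ∀ a t : ℝ, π < a → 1 ≤ t → (a + π) / δ < t →
        ‖∫ b in (a/t)..δ, Complex.exp (Complex.I * (b:ℂ) * (t:ℂ)) * g b‖ ≤
          C * (t ^ (-(1 - β)) * a ^ (-(2*β - 1)) + t ^ (-(β - ε))) := by
  obtain ⟨C, hC, hbound⟩ := stmt2_general (E := ℂ) β (β - ε) δ K hβ hδ hK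
  exact ⟨C, hC, fun g hgc hg hincr a t ha _ hat =>
    hbound g (hgc.aestronglyMeasurable measurableSet_Ioc) hg hincr a t ha.le hat.le⟩
end

section
/- Let (Y,μ) be a probability space, β ∈ (1/2,1), q ∈ (1, 2β], c > 0, C₀ > 0, and let τ : Y → ℝ be measurable with τ(y) ≥ 1 for a.e. y. Suppose μ(τ > t) = c t^{−β} + H(t) for all t > 0, where |H(t)| ≤ C₀ t^{−q} for all t ≥ 1. Set c_β = Γ(1−β) e^{iβπ/2} and e₁ = i ∫_0^∞ H(t) dt (this integral converges absolutely). Then there exists C > 0 such that |1 − ∫_Y e^{−ibτ} dμ − c c_β b^{β} − e₁ b| ≤ C b^{q} for all b ∈ (0,1]. -/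
open MeasureTheory Real
open scoped ENNReal

open Set Filter Topology

/-!
With `T t = μ (τ > t)` and `s` in the open right half-plane, Fubini gives
`μ Y - ∫ exp (-s τ) = s ∫₀^∞ exp (-s t) T t dt`. The main term `c t ^ (-β)` of `T` contributes
`c Γ(1 - β) s ^ β`, so what remains is `s ∫₀^∞ exp (-s t) H t dt`. Both sides of this identity are
continuous up to the imaginary axis, away from `0`, which replaces the improper integral defining
`c_β`. Finally `exp (-s t) - 1` is at most `2 min(1, |s| t)`, and the scaling `u = |s| t` turns
`∫ min(1, |s| t) t ^ (-q) dt` into a multiple of `|s| ^ (q - 1)`.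
-/

section Exponential

variable {s : ℂ}

theorem norm_cexp_neg_mul_ofReal (s : ℂ) (t : ℝ) :
    ‖Complex.exp (-s * t)‖ = exp (-s.re * t) := by
  simp [Complex.norm_exp]

theorem norm_cexp_neg_mul_ofReal_le_one (hs : 0 ≤ s.re) {t : ℝ} (ht : 0 ≤ t) :
    ‖Complex.exp (-s * t)‖ ≤ 1 := by
  rw [norm_cexp_neg_mul_ofReal, exp_le_one_iff]
  exact mul_nonpos_of_nonpos_of_nonneg (neg_nonpos.2 hs) ht

theorem norm_cexp_neg_mul_ofReal_sub_one_le (hs : 0 ≤ s.re) {t : ℝ} (ht : 0 ≤ t) :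
    ‖Complex.exp (-s * t) - 1‖ ≤ 2 * min 1 (‖s‖ * t) := by
  have hnorm : ‖-s * t‖ = ‖s‖ * t := by simp [abs_of_nonneg ht]
  rcases le_total (‖s‖ * t) 1 with h | h
  · rw [min_eq_right h, ← hnorm]
    exact Complex.norm_exp_sub_one_le (hnorm.trans_le h)
  · calc ‖Complex.exp (-s * t) - 1‖
        ≤ ‖Complex.exp (-s * t)‖ + ‖(1 : ℂ)‖ := norm_sub_le _ _
      _ ≤ 1 + 1 := by gcongr; exacts [norm_cexp_neg_mul_ofReal_le_one hs ht, norm_one.le]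
      _ = 2 * min 1 (‖s‖ * t) := by rw [min_eq_left h]; norm_num

variable {X : Type*} [MeasurableSpace X] {ν : Measure X} {g : X → ℝ} {f : X → ℂ}

theorem integrable_cexp_neg_mul (hg : AEMeasurable g ν) (hg₀ : ∀ᵐ x ∂ν, 0 ≤ g x)
    (hf : Integrable f ν) (hs : 0 ≤ s.re) :
    Integrable (fun x => Complex.exp (-s * g x) * f x) ν :=
  hf.bdd_mul (c := 1) (AEMeasurable.aestronglyMeasurable (by fun_prop))
    (hg₀.mono fun _ hx => norm_cexp_neg_mul_ofReal_le_one hs hx)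

theorem integrableOn_Ioi_cexp_neg_mul {h : ℝ → ℂ} (hh : IntegrableOn h (Ioi 0)) (hs : 0 ≤ s.re) :
    IntegrableOn (fun t : ℝ => Complex.exp (-s * t) * h t) (Ioi 0) :=
  integrable_cexp_neg_mul aemeasurable_id
    ((ae_restrict_mem measurableSet_Ioi).mono fun _ (ht : 0 < _) => ht.le) hh hs

theorem continuousOn_integral_cexp_neg_mul (hg : AEMeasurable g ν) (hg₀ : ∀ᵐ x ∂ν, 0 ≤ g x)
    (hf : Integrable f ν) :
    ContinuousOn (fun s : ℂ => ∫ x, Complex.exp (-s * g x) * f x ∂ν) {s | 0 ≤ s.re} := by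
  refine continuousOn_of_dominated (bound := fun x => ‖f x‖)
    (fun s hs => (integrable_cexp_neg_mul hg hg₀ hf hs).aestronglyMeasurable)
    (fun s hs => hg₀.mono fun x hx => ?_) hf.norm (.of_forall fun x => by fun_prop)
  rw [norm_mul]
  exact mul_le_of_le_one_left (norm_nonneg _) (norm_cexp_neg_mul_ofReal_le_one hs hx)

end Exponential

section LaplacePower

variable {a : ℝ} {s : ℂ}

theorem norm_cexp_neg_mul_mul_rpow (a : ℝ) (s : ℂ) {t : ℝ} (ht : 0 < t) :
    ‖Complex.exp (-s * t) * ((t ^ a : ℝ) : ℂ)‖ = t ^ a * exp (-s.re * t) := by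
  rw [norm_mul, norm_cexp_neg_mul_ofReal, Complex.norm_real, norm_of_nonneg (by positivity),
    mul_comm]

theorem integrableOn_rpow_mul_exp_neg_mul (ha : -1 < a) {ε : ℝ} (hε : 0 < ε) :
    IntegrableOn (fun t : ℝ => t ^ a * exp (-ε * t)) (Ioi 0) := by
  simpa using integrableOn_rpow_mul_exp_neg_mul_rpow ha one_pos hε

theorem integrableOn_cexp_neg_mul_mul_rpow (ha : -1 < a) (hs : 0 < s.re) :
    IntegrableOn (fun t : ℝ => Complex.exp (-s * t) * ((t ^ a : ℝ) : ℂ)) (Ioi 0) :=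
  (integrableOn_rpow_mul_exp_neg_mul ha hs).mono' (Measurable.aestronglyMeasurable (by fun_prop))
    ((ae_restrict_mem measurableSet_Ioi).mono fun _ ht => (norm_cexp_neg_mul_mul_rpow a s ht).le)

theorem differentiableAt_integral_cexp_neg_mul_mul_rpow (ha : -1 < a) (hs : 0 < s.re) :
    DifferentiableAt ℂ
      (fun z : ℂ => ∫ t in Ioi (0 : ℝ), Complex.exp (-z * t) * ((t ^ a : ℝ) : ℂ)) s := by
  have hU : {z : ℂ | s.re / 2 < z.re} ∈ 𝓝 s :=
    (isOpen_lt continuous_const Complex.continuous_re).mem_nhds (half_lt_self hs)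
  refine (hasDerivAt_integral_of_dominated_loc_of_deriv_le hU
    (F := fun z t => Complex.exp (-z * t) * ((t ^ a : ℝ) : ℂ))
    (F' := fun z t => -(Complex.exp (-z * t) * ((t ^ (a + 1) : ℝ) : ℂ)))
    (bound := fun t => t ^ (a + 1) * exp (-(s.re / 2) * t))
    (.of_forall fun z => Measurable.aestronglyMeasurable (by fun_prop))
    (integrableOn_cexp_neg_mul_mul_rpow ha hs)
    (Measurable.aestronglyMeasurable (by fun_prop)) ?_
    (integrableOn_rpow_mul_exp_neg_mul (by linarith) (half_pos hs)) ?_).2.differentiableAt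
  · filter_upwards [ae_restrict_mem measurableSet_Ioi] with t (ht : 0 < t) z
      (hz : s.re / 2 < z.re)
    rw [norm_neg, norm_cexp_neg_mul_mul_rpow _ _ ht]
    gcongr
  · filter_upwards [ae_restrict_mem measurableSet_Ioi] with t (ht : 0 < t) z _
    refine (((hasDerivAt_id z).neg.mul_const (t : ℂ)).cexp.mul_const _).congr_deriv ?_
    rw [rpow_add_one ht.ne', Complex.ofReal_mul]
    simp only [Pi.neg_apply, id_eq]
    ring

theorem integral_cexp_neg_mul_mul_rpow_of_pos (ha : -1 < a) {x : ℝ} (hx : 0 < x) :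
    ∫ t in Ioi (0 : ℝ), Complex.exp (-x * t) * ((t ^ a : ℝ) : ℂ)
      = Gamma (a + 1) * (x : ℂ) ^ (-(a + 1 : ℂ)) := by
  have hpow : (x : ℂ) ^ (-(a + 1 : ℂ)) = (((1 / x) ^ (a + 1) : ℝ) : ℂ) := by
    rw [one_div, inv_rpow hx.le, ← rpow_neg hx.le, Complex.ofReal_cpow hx.le]
    push_cast
    rfl
  rw [hpow, mul_comm, ← Complex.ofReal_mul,
    ← integral_rpow_mul_exp_neg_mul_Ioi (by linarith) hx, ← integral_complex_ofReal]
  refine setIntegral_congr_fun measurableSet_Ioi fun t _ => ?_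
  simp [mul_comm]

theorem integral_cexp_neg_mul_mul_rpow (ha : -1 < a) (hs : 0 < s.re) :
    ∫ t in Ioi (0 : ℝ), Complex.exp (-s * t) * ((t ^ a : ℝ) : ℂ)
      = Gamma (a + 1) * s ^ (-(a + 1 : ℂ)) := by
  have hopen : IsOpen {z : ℂ | 0 < z.re} := isOpen_lt continuous_const Complex.continuous_re
  have hleft : DifferentiableOn ℂ
      (fun z : ℂ => ∫ t in Ioi (0 : ℝ), Complex.exp (-z * t) * ((t ^ a : ℝ) : ℂ))
      {z | 0 < z.re} :=
    fun z hz => (differentiableAt_integral_cexp_neg_mul_mul_rpow ha hz).differentiableWithinAt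
  have hright : DifferentiableOn ℂ
      (fun z : ℂ => (Gamma (a + 1) : ℂ) * z ^ (-(a + 1 : ℂ))) {z | 0 < z.re} :=
    (differentiableOn_id.cpow_const fun z hz => Or.inl hz).const_mul _
  have hlim : Tendsto (fun x : ℝ => (x : ℂ)) (𝓝[>] 1) (𝓝[≠] 1) :=
    Complex.continuous_ofReal.continuousWithinAt.tendsto_nhdsWithin fun x (hx : 1 < x) => by
      simpa using hx.ne'
  have hfreq : ∃ᶠ z in 𝓝[≠] (1 : ℂ),
      ∫ t in Ioi (0 : ℝ), Complex.exp (-z * t) * ((t ^ a : ℝ) : ℂ)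
        = Gamma (a + 1) * z ^ (-(a + 1 : ℂ)) := by
    refine hlim.frequently (Eventually.frequently ?_)
    filter_upwards [self_mem_nhdsWithin] with x (hx : 1 < x)
    exact integral_cexp_neg_mul_mul_rpow_of_pos ha (one_pos.trans hx)
  exact (hleft.analyticOnNhd hopen).eqOn_of_preconnected_of_frequently_eq
    (hright.analyticOnNhd hopen) (convex_halfSpace_re_gt 0).isPreconnected
    (by simp) hfreq hs

end LaplacePower

section LayerCake

variable {Y : Type*} [MeasurableSpace Y] {μ : Measure Y} [IsFiniteMeasure μ] {τ : Y → ℝ}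

theorem antitone_measureReal_setOf_lt : Antitone fun t => μ.real {y | t < τ y} :=
  fun _ _ htu => measureReal_mono fun _ hy => htu.trans_lt hy

theorem integral_intervalIntegral_eq_setIntegral_measureReal_smul
    {E : Type*} [NormedAddCommGroup E] [NormedSpace ℝ E] [CompleteSpace E] {g : ℝ → E}
    (hτ : AEMeasurable τ μ) (hτ₀ : ∀ᵐ y ∂μ, 0 ≤ τ y) (hg : IntegrableOn g (Ioi 0)) :
    ∫ y, (∫ t in (0 : ℝ)..τ y, g t) ∂μ = ∫ t in Ioi (0 : ℝ), μ.real {y | t < τ y} • g t := by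
  have hint : Integrable (Function.uncurry fun y => (Iio (τ y)).indicator g)
      (μ.prod (volume.restrict (Ioi 0))) :=
    (hg.integrable.comp_snd μ).indicator₀
      (s := {p : Y × ℝ | p.2 < τ p.1})
      (nullMeasurableSet_lt measurable_snd.aemeasurable hτ.comp_fst)
  calc ∫ y, (∫ t in (0 : ℝ)..τ y, g t) ∂μ
      = ∫ y, (∫ t in Ioi (0 : ℝ), (Iio (τ y)).indicator g t) ∂μ := by
        refine integral_congr_ae (hτ₀.mono fun y hy => ?_)
        simp only [setIntegral_indicator measurableSet_Iio, Ioi_inter_Iio,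
          intervalIntegral.integral_of_le hy, integral_Ioc_eq_integral_Ioo]
    _ = ∫ t in Ioi (0 : ℝ), ∫ y, {y | t < τ y}.indicator (fun _ => g t) y ∂μ :=
        integral_integral_swap hint
    _ = ∫ t in Ioi (0 : ℝ), μ.real {y | t < τ y} • g t := by
        congr with t
        have hset : NullMeasurableSet {y | t < τ y} μ := nullMeasurableSet_lt aemeasurable_const hτ
        rw [integral_indicator₀ hset, setIntegral_const]

theorem measureReal_univ_sub_integral_cexp (hτ : AEMeasurable τ μ) (hτ₀ : ∀ᵐ y ∂μ, 0 ≤ τ y)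
    {s : ℂ} (hs : 0 < s.re) :
    μ.real univ - ∫ y, Complex.exp (-s * τ y) ∂μ
      = s * ∫ t in Ioi (0 : ℝ), Complex.exp (-s * t) * μ.real {y | t < τ y} := by
  have hs₀ : s ≠ 0 := by rintro rfl; simp at hs
  have hexp : Integrable (fun y => Complex.exp (-s * τ y)) μ := by
    simpa using integrable_cexp_neg_mul hτ hτ₀ (integrable_const 1) hs.le
  have hprim (x : ℝ) : 1 - Complex.exp (-s * x) = s * ∫ t in (0 : ℝ)..x, Complex.exp (-s * t) := by
    rw [integral_exp_mul_complex (neg_ne_zero.2 hs₀)]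
    field_simp
    simp
  calc (μ.real univ : ℂ) - ∫ y, Complex.exp (-s * τ y) ∂μ
      = ∫ y, (1 - Complex.exp (-s * τ y)) ∂μ := by
        rw [integral_sub (integrable_const _) hexp]
        simp
    _ = s * ∫ y, (∫ t in (0 : ℝ)..τ y, Complex.exp (-s * t)) ∂μ := by
        simp only [hprim, integral_const_mul]
    _ = s * ∫ t in Ioi (0 : ℝ), μ.real {y | t < τ y} • Complex.exp (-s * t) := by
        rw [integral_intervalIntegral_eq_setIntegral_measureReal_smul hτ hτ₀
          (integrableOn_exp_mul_complex_Ioi (by simpa using hs) 0)]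
    _ = s * ∫ t in Ioi (0 : ℝ), Complex.exp (-s * t) * μ.real {y | t < τ y} := by
        simp only [Complex.real_smul, mul_comm]

end LayerCake

section TailExpansion

variable {β c : ℝ} {H : ℝ → ℝ}

theorem integrableOn_Ioi_of_eq_const_mul_rpow_add {T : ℝ → ℝ} {q C₀ : ℝ} (hβ : β < 1)
    (hq : 1 < q) (hT : LocallyIntegrable T)
    (htail : ∀ t, 0 < t → T t = c * t ^ (-β) + H t)
    (hH : ∀ t, 1 ≤ t → |H t| ≤ C₀ * t ^ (-q)) :
    IntegrableOn H (Ioi 0) := by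
  have heq : EqOn (fun t => T t - c * t ^ (-β)) H (Ioi 0) := fun t ht => by simp [htail t ht]
  have hnear : IntegrableOn H (Ioc 0 1) := by
    have hpow : IntegrableOn (fun t : ℝ => c * t ^ (-β)) (Ioc 0 1) :=
      (intervalIntegral.intervalIntegrable_rpow' (by linarith)).1.const_mul c
    exact (((hT.integrableOn_isCompact isCompact_Icc).mono_set Ioc_subset_Icc_self).sub
      hpow).congr_fun (heq.mono Ioc_subset_Ioi_self) measurableSet_Ioc
  have hfar : IntegrableOn H (Ioi 1) := by
    have hmeas : AEStronglyMeasurable (fun t => T t - c * t ^ (-β)) (volume.restrict (Ioi 1)) :=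
      hT.aestronglyMeasurable.restrict.sub (Measurable.aestronglyMeasurable (by fun_prop))
    refine ((integrableOn_Ioi_rpow_of_lt (neg_lt_neg hq) one_pos).const_mul C₀).mono'
      (hmeas.congr ?_) ?_
    · exact (ae_restrict_mem measurableSet_Ioi).mono fun t (ht : 1 < t) =>
        heq (zero_lt_one.trans ht)
    · exact (ae_restrict_mem measurableSet_Ioi).mono fun t (ht : 1 < t) => hH t ht.le
  exact Ioc_union_Ioi_eq_Ioi (zero_le_one (α := ℝ)) ▸ hnear.union hfar

variable {Y : Type*} [MeasurableSpace Y] {μ : Measure Y} [IsFiniteMeasure μ] {τ : Y → ℝ} {s : ℂ}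

theorem measureReal_univ_sub_integral_cexp_of_tail_of_re_pos (hβ : β < 1) (hτ : AEMeasurable τ μ)
    (hτ₀ : ∀ᵐ y ∂μ, 0 ≤ τ y)
    (htail : ∀ t, 0 < t → μ.real {y | t < τ y} = c * t ^ (-β) + H t)
    (hint : IntegrableOn H (Ioi 0)) (hs : 0 < s.re) :
    μ.real univ - ∫ y, Complex.exp (-s * τ y) ∂μ
      = c * (Gamma (1 - β) * s ^ (β : ℂ))
        + s * ∫ t in Ioi (0 : ℝ), Complex.exp (-s * t) * H t := by
  have hs₀ : s ≠ 0 := by rintro rfl; simp at hs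
  have hsplit : ∫ t in Ioi (0 : ℝ), Complex.exp (-s * t) * μ.real {y | t < τ y}
      = c * (∫ t in Ioi (0 : ℝ), Complex.exp (-s * t) * ((t ^ (-β) : ℝ) : ℂ))
        + ∫ t in Ioi (0 : ℝ), Complex.exp (-s * t) * H t := by
    have hpow := (integrableOn_cexp_neg_mul_mul_rpow (a := -β) (by linarith) hs).const_mul (c : ℂ)
    have hrest := integrableOn_Ioi_cexp_neg_mul hint.ofReal hs.le
    rw [← integral_const_mul]
    refine Eq.trans ?_ (integral_add hpow hrest)
    refine setIntegral_congr_fun measurableSet_Ioi fun t ht => ?_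
    simp only [htail t ht]
    push_cast
    ring
  have hpow : s * s ^ (-((-β : ℝ) + 1 : ℂ)) = s ^ (β : ℂ) := by
    have hexponent : (β : ℂ) = 1 + -((-β : ℝ) + 1) := by push_cast; ring
    rw [hexponent, Complex.cpow_add _ _ hs₀, Complex.cpow_one]
  rw [measureReal_univ_sub_integral_cexp hτ hτ₀ hs, hsplit,
    integral_cexp_neg_mul_mul_rpow (by linarith) hs, ← hpow, neg_add_eq_sub]
  ring

theorem measureReal_univ_sub_integral_cexp_of_tail_of_re_nonneg (hβ : β < 1) (hτ : AEMeasurable τ μ)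
    (hτ₀ : ∀ᵐ y ∂μ, 0 ≤ τ y)
    (htail : ∀ t, 0 < t → μ.real {y | t < τ y} = c * t ^ (-β) + H t)
    (hint : IntegrableOn H (Ioi 0)) (hs : 0 ≤ s.re) (hs₀ : s ≠ 0) :
    μ.real univ - ∫ y, Complex.exp (-s * τ y) ∂μ
      = c * (Gamma (1 - β) * s ^ (β : ℂ))
        + s * ∫ t in Ioi (0 : ℝ), Complex.exp (-s * t) * H t := by
  have hchar : ContinuousOn (fun z : ℂ => ∫ y, Complex.exp (-z * τ y) ∂μ) {z | 0 ≤ z.re} := by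
    simpa using continuousOn_integral_cexp_neg_mul hτ hτ₀ (integrable_const 1)
  have hrest : ContinuousOn (fun z : ℂ => ∫ t in Ioi (0 : ℝ), Complex.exp (-z * t) * H t)
      {z | 0 ≤ z.re} :=
    continuousOn_integral_cexp_neg_mul aemeasurable_id
      ((ae_restrict_mem measurableSet_Ioi).mono fun _ (ht : 0 < _) => ht.le) hint.ofReal
  have hpow : ContinuousOn (fun z : ℂ => z ^ (β : ℂ)) ({z | 0 ≤ z.re} \ {0}) := by
    refine continuousOn_id.cpow_const fun z hz => ?_
    by_contra hslit
    rw [Complex.mem_slitPlane_iff, not_or, not_lt, not_not] at hslit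
    exact hz.2 (Complex.ext (hslit.1.antisymm hz.1) hslit.2)
  refine EqOn.of_subset_closure (s := {z : ℂ | 0 < z.re})
    (fun z hz => measureReal_univ_sub_integral_cexp_of_tail_of_re_pos hβ hτ hτ₀ htail hint hz)
    (continuousOn_const.sub (hchar.mono sdiff_subset))
    ((continuousOn_const.mul (continuousOn_const.mul hpow)).add
      (continuousOn_id.mul (hrest.mono sdiff_subset)))
    (fun z (hz : 0 < z.re) => ⟨hz.le, by rintro rfl; simp at hz⟩) ?_ ⟨hs, hs₀⟩
  rw [Complex.closure_setOfPred_lt_re]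
  exact sdiff_subset

end TailExpansion

section Remainder

variable {q r : ℝ}

theorem min_one_le_rpow {x p : ℝ} (hx : 0 ≤ x) (hp₀ : 0 ≤ p) (hp₁ : p ≤ 1) : min 1 x ≤ x ^ p := by
  rcases le_total x 1 with h | h
  · rw [min_eq_right h]
    simpa using rpow_le_rpow_of_exponent_ge' hx h hp₀ hp₁
  · exact (min_le_left _ _).trans (one_le_rpow h hp₀)

theorem integrableOn_min_one_mul_rpow (hq : q ∈ Ioo (1 : ℝ) 2) :
    IntegrableOn (fun u : ℝ => min 1 u * u ^ (-q)) (Ioi 0) := by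
  rw [← Ioc_union_Ioi_eq_Ioi zero_le_one]
  refine .union ?_ ?_
  · refine IntegrableOn.congr_fun
      (intervalIntegral.intervalIntegrable_rpow' (r := 1 - q) (by linarith [hq.2])).1
      (fun u hu => ?_) measurableSet_Ioc
    rw [min_eq_right hu.2, sub_eq_add_neg, rpow_one_add' hu.1.le (by linarith [hq.1, hq.2])]
  · refine (integrableOn_Ioi_rpow_of_lt (neg_lt_neg hq.1) one_pos).congr_fun
      (fun u hu => ?_) measurableSet_Ioi
    rw [min_eq_left (le_of_lt hu), one_mul]

theorem min_one_mul_rpow_neg_eq (hr : 0 < r) {t : ℝ} (ht : 0 < t) :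
    min 1 (r * t) * t ^ (-q) = r ^ q * (min 1 (r * t) * (r * t) ^ (-q)) := by
  rw [mul_rpow hr.le ht.le, rpow_neg hr.le]
  field_simp

theorem integrableOn_min_one_mul_left_mul_rpow (hq : q ∈ Ioo (1 : ℝ) 2) (hr : 0 < r) :
    IntegrableOn (fun t : ℝ => min 1 (r * t) * t ^ (-q)) (Ioi 0) := by
  have hscaled : IntegrableOn (fun t : ℝ => min 1 (r * t) * (r * t) ^ (-q)) (Ioi 0) :=
    (integrableOn_Ioi_comp_mul_left_iff _ 0 hr).2 (by
      simpa using integrableOn_min_one_mul_rpow hq)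
  exact IntegrableOn.congr_fun (hscaled.const_mul (r ^ q))
    (fun t ht => (min_one_mul_rpow_neg_eq hr ht).symm) measurableSet_Ioi

theorem integral_min_one_mul_left_mul_rpow (hr : 0 < r) :
    ∫ t in Ioi (0 : ℝ), min 1 (r * t) * t ^ (-q)
      = r ^ (q - 1) * ∫ u in Ioi (0 : ℝ), min 1 u * u ^ (-q) := by
  rw [setIntegral_congr_fun measurableSet_Ioi fun t ht => min_one_mul_rpow_neg_eq hr ht,
    integral_const_mul, integral_comp_mul_left_Ioi (fun u => min 1 u * u ^ (-q)) 0 hr, mul_zero,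
    smul_eq_mul, rpow_sub_one hr.ne']
  ring

theorem setIntegral_min_one_mul_norm_le {E : Type*} [NormedAddCommGroup E] {H : ℝ → E} {C₀ : ℝ}
    (hq : q ∈ Ioo (1 : ℝ) 2) (hint : IntegrableOn H (Ioi 0))
    (hH : ∀ t, 1 ≤ t → ‖H t‖ ≤ C₀ * t ^ (-q)) (hr : 0 < r) :
    ∫ t in Ioi (0 : ℝ), min 1 (r * t) * ‖H t‖
      ≤ r ^ (q - 1) * ((∫ t in Ioi (0 : ℝ), ‖H t‖)
        + C₀ * ∫ u in Ioi (0 : ℝ), min 1 u * u ^ (-q)) := by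
  have hC₀ : 0 ≤ C₀ := by simpa using (norm_nonneg _).trans (hH 1 le_rfl)
  have hmin {t : ℝ} (ht : 0 < t) : 0 ≤ min 1 (r * t) := by positivity
  have hpt {t : ℝ} (ht : 0 < t) : min 1 (r * t) * ‖H t‖
      ≤ r ^ (q - 1) * ‖H t‖ + C₀ * (min 1 (r * t) * t ^ (-q)) := by
    have hdecay : 0 ≤ min 1 (r * t) * t ^ (-q) := mul_nonneg (hmin ht) (by positivity)
    rcases le_total t 1 with ht₁ | ht₁
    · have hsmall : min 1 (r * t) ≤ r ^ (q - 1) :=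
        (min_le_min_left 1 (mul_le_of_le_one_right hr.le ht₁)).trans
          (min_one_le_rpow hr.le (by linarith [hq.1]) (by linarith [hq.2]))
      nlinarith [mul_le_mul_of_nonneg_right hsmall (norm_nonneg (H t)), mul_nonneg hC₀ hdecay]
    · have hlarge := mul_le_mul_of_nonneg_left (hH t ht₁) (hmin ht)
      have := mul_nonneg (rpow_nonneg hr.le (q - 1)) (norm_nonneg (H t))
      linarith
  have hint₁ := hint.norm.const_mul (r ^ (q - 1))
  have hint₂ := (integrableOn_min_one_mul_left_mul_rpow hq hr).const_mul C₀
  calc ∫ t in Ioi (0 : ℝ), min 1 (r * t) * ‖H t‖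
      ≤ ∫ t in Ioi (0 : ℝ), (r ^ (q - 1) * ‖H t‖ + C₀ * (min 1 (r * t) * t ^ (-q))) :=
        integral_mono_of_nonneg
          ((ae_restrict_mem measurableSet_Ioi).mono fun t ht =>
            mul_nonneg (hmin ht) (norm_nonneg _))
          (hint₁.add hint₂) ((ae_restrict_mem measurableSet_Ioi).mono fun t ht => hpt ht)
    _ = _ := by
        rw [integral_add hint₁ hint₂, integral_const_mul, integral_const_mul,
          integral_min_one_mul_left_mul_rpow hr]
        ring

theorem norm_integral_cexp_neg_mul_sub_integral_le {H : ℝ → ℂ} {C₀ : ℝ}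
    (hq : q ∈ Ioo (1 : ℝ) 2) (hint : IntegrableOn H (Ioi 0))
    (hH : ∀ t, 1 ≤ t → ‖H t‖ ≤ C₀ * t ^ (-q)) {s : ℂ} (hs : 0 ≤ s.re) (hs₀ : s ≠ 0) :
    ‖(∫ t in Ioi (0 : ℝ), Complex.exp (-s * t) * H t) - ∫ t in Ioi (0 : ℝ), H t‖
      ≤ 2 * ((∫ t in Ioi (0 : ℝ), ‖H t‖) + C₀ * ∫ u in Ioi (0 : ℝ), min 1 u * u ^ (-q))
        * ‖s‖ ^ (q - 1) := by
  have hexp : IntegrableOn (fun t : ℝ => Complex.exp (-s * t) * H t) (Ioi 0) :=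
    integrableOn_Ioi_cexp_neg_mul hint hs
  have hdom : IntegrableOn (fun t => 2 * (min 1 (‖s‖ * t) * ‖H t‖)) (Ioi 0) := by
    refine (hint.norm.bdd_mul (c := 1)
      (Continuous.aestronglyMeasurable (by fun_prop)) ?_).const_mul 2
    filter_upwards [ae_restrict_mem measurableSet_Ioi] with t (ht : 0 < t)
    rw [norm_of_nonneg (by positivity)]
    exact min_le_left _ _
  calc ‖(∫ t in Ioi (0 : ℝ), Complex.exp (-s * t) * H t) - ∫ t in Ioi (0 : ℝ), H t‖
      = ‖∫ t in Ioi (0 : ℝ), (Complex.exp (-s * t) - 1) * H t‖ := by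
        simp only [← integral_sub hexp hint, sub_mul, one_mul]
    _ ≤ ∫ t in Ioi (0 : ℝ), 2 * (min 1 (‖s‖ * t) * ‖H t‖) := by
        refine norm_integral_le_of_norm_le hdom ?_
        filter_upwards [ae_restrict_mem measurableSet_Ioi] with t (ht : 0 < t)
        rw [norm_mul, ← mul_assoc]
        gcongr
        exact norm_cexp_neg_mul_ofReal_sub_one_le hs ht.le
    _ = 2 * ∫ t in Ioi (0 : ℝ), min 1 (‖s‖ * t) * ‖H t‖ := integral_const_mul _ _
    _ ≤ 2 * (‖s‖ ^ (q - 1) * _) := mul_le_mul_of_nonneg_left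
        (setIntegral_min_one_mul_norm_le hq hint hH (norm_pos_iff.2 hs₀)) zero_le_two
    _ = _ := by ring

end Remainder

theorem I_mul_ofReal_cpow {b : ℝ} (hb : 0 < b) (β : ℝ) :
    (Complex.I * b) ^ (β : ℂ)
      = Complex.exp (Complex.I * (β : ℂ) * (π : ℂ) / 2) * ((b ^ β : ℝ) : ℂ) := by
  have hlog : Complex.log (Complex.I * b) = Real.log b + π / 2 * Complex.I := by
    rw [mul_comm, Complex.log_ofReal_mul hb Complex.I_ne_zero, Complex.log_I]
  rw [Complex.cpow_def_of_ne_zero (by simp [hb.ne']), hlog, rpow_def_of_pos hb,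
    Complex.ofReal_exp, ← Complex.exp_add]
  congr 1
  push_cast
  ring

theorem stmt9_general {Y : Type*} [MeasurableSpace Y] {μ : Measure Y} [IsFiniteMeasure μ]
    {β q c C₀ : ℝ} (hβ : β < 1) (hq : q ∈ Ioo (1 : ℝ) 2) {τ : Y → ℝ} (hτ : AEMeasurable τ μ)
    (hτ₀ : ∀ᵐ y ∂μ, 0 ≤ τ y) {H : ℝ → ℝ}
    (htail : ∀ t, 0 < t → μ.real {y | t < τ y} = c * t ^ (-β) + H t)
    (hH : ∀ t, 1 ≤ t → |H t| ≤ C₀ * t ^ (-q)) :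
    IntegrableOn H (Ioi 0) ∧ ∃ C, 0 < C ∧ ∀ s : ℂ, 0 ≤ s.re → s ≠ 0 →
      ‖μ.real univ - ∫ y, Complex.exp (-s * τ y) ∂μ - c * (Gamma (1 - β) * s ^ (β : ℂ))
        - s * (∫ t in Ioi (0 : ℝ), H t : ℝ)‖ ≤ C * ‖s‖ ^ q := by
  have hint : IntegrableOn H (Ioi 0) := integrableOn_Ioi_of_eq_const_mul_rpow_add hβ hq.1
    antitone_measureReal_setOf_lt.locallyIntegrable htail hH
  set K := 2 * ((∫ t in Ioi (0 : ℝ), ‖(H t : ℂ)‖) + C₀ * ∫ u in Ioi (0 : ℝ), min 1 u * u ^ (-q))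
  refine ⟨hint, max K 1, by positivity, fun s hs hs₀ => ?_⟩
  have hrest := norm_integral_cexp_neg_mul_sub_integral_le hq hint.ofReal
    (by simpa using hH) hs hs₀
  rw [measureReal_univ_sub_integral_cexp_of_tail_of_re_nonneg hβ hτ hτ₀ htail hint hs hs₀,
    add_sub_cancel_left, ← mul_sub, norm_mul, ← integral_complex_ofReal]
  calc ‖s‖ * ‖(∫ t in Ioi (0 : ℝ), Complex.exp (-s * t) * H t) - ∫ t in Ioi (0 : ℝ), (H t : ℂ)‖
      ≤ ‖s‖ * (K * ‖s‖ ^ (q - 1)) := by gcongr; exact hrest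
    _ = K * ‖s‖ ^ q := by rw [rpow_sub_one (norm_ne_zero_iff.2 hs₀)]; field_simp
    _ ≤ max K 1 * ‖s‖ ^ q := by gcongr; exact le_max_left _ _

theorem stmt9 {Y : Type*} [MeasurableSpace Y] (μ : Measure Y) [IsProbabilityMeasure μ]
    (β q c C₀ : ℝ) (hβ : β ∈ Set.Ioo (1/2 : ℝ) 1) (hq : q ∈ Set.Ioc 1 (2*β))
    (hc : 0 < c) (hC₀ : 0 < C₀)
    (τ : Y → ℝ) (hτmeas : Measurable τ) (hτ1 : ∀ᵐ y ∂μ, 1 ≤ τ y)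
    (H : ℝ → ℝ)
    (htail : ∀ t : ℝ, 0 < t → (μ {y | t < τ y}).toReal = c * t ^ (-β) + H t)
    (hH : ∀ t : ℝ, 1 ≤ t → |H t| ≤ C₀ * t ^ (-q)) :
    IntegrableOn H (Set.Ioi (0:ℝ)) ∧
    ∃ C : ℝ, 0 < C ∧ ∀ b ∈ Set.Ioc (0:ℝ) 1,
      ‖1 - (∫ y, Complex.exp (-Complex.I * (b:ℂ) * (τ y : ℂ)) ∂μ)
          - (c:ℂ) * ((Real.Gamma (1-β) : ℂ) * Complex.exp (Complex.I * (β:ℂ) * (π:ℂ) / 2))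
              * ((b ^ β : ℝ) : ℂ)
          - Complex.I * ((∫ t in Set.Ioi (0:ℝ), H t : ℝ) : ℂ) * (b:ℂ)‖ ≤ C * b ^ q := by
  obtain ⟨hint, C, hC, h⟩ := stmt9_general hβ.2 ⟨hq.1, by linarith [hq.2, hβ.2]⟩
    hτmeas.aemeasurable (hτ1.mono fun _ => zero_le_one.trans) htail hH
  refine ⟨hint, C, hC, fun b hb => ?_⟩
  simpa [I_mul_ofReal_cpow hb.1, abs_of_pos hb.1, mul_assoc, mul_left_comm, mul_comm] using
    h (Complex.I * b) (by simp) (by simp [hb.1.ne'])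
end

section
/- Let (X,μ) be a finite measure space, f : X → X measurable, τ₀ : X → ℝ measurable, and let d_* > 0 and q ∈ (0,1). For n ≥ 1 define X_q(n) = { x ∈ X : ⌊τ₀(x)⌋ = n and τ₀(f^j x) ≥ n^{1−q} for some integer j with 1 ≤ j < d_* log n }. Suppose μ(τ₀ > t) ≤ C₁ t^{−β} for all t ≥ 1, where C₁ > 0 and β ∈ (0,1), and suppose there exist C₂ > 0 and p ∈ (0,1) such that μ(X_q(n)) ≤ C₂ n^{−p} μ({x : ⌊τ₀(x)⌋ = n}) for all n ≥ 1. Then Σ_{n≥1} n^{β'} μ(X_q(n)) < ∞ for every β' ∈ (β, β+p). -/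
open MeasureTheory
open scoped ENNReal

/-- The set `X_q(n)` of points whose return time has integer part exactly `n`
and which experience another large return time within time `d_* log n`. -/
def Xq {X : Type*} (f : X → X) (τ₀ : X → ℝ) (dstar q : ℝ) (n : ℕ) : Set X :=
  {x | ⌊τ₀ x⌋ = (n : ℤ) ∧
    ∃ j : ℕ, 1 ≤ j ∧ (j : ℝ) < dstar * Real.log n ∧ (n : ℝ) ^ (1 - q) ≤ τ₀ (f^[j] x)}

/-!
Write `A n = {⌊τ₀⌋ = n}`. The hypothesis on `X_q(n)` reduces the claim to the convergence of
`∑ n ^ s * μ (A n)` with `s = β' - p < β`. On a dyadic block `2 ^ k < n ≤ 2 ^ (k + 1)` the weight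
`n ^ s` is comparable to `2 ^ (k * s)`, and the sets `A n` of the block are disjoint subsets of
`{2 ^ k < τ₀}`, so the block contributes `O(2 ^ (k * (s - β)))`: the series is dominated by a
convergent geometric series.
-/

section Series

open Set

lemma rpow_le_rpow_abs_mul_rpow {a b x : ℝ} (ha : 0 < a) (hax : a ≤ x) (hxb : x ≤ b * a)
    (s : ℝ) : x ^ s ≤ b ^ |s| * a ^ s := by
  have hb : 1 ≤ b := le_of_mul_le_mul_right (by linarith) ha
  rcases le_total 0 s with hs | hs
  · calc x ^ s ≤ (b * a) ^ s := Real.rpow_le_rpow (ha.le.trans hax) hxb hs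
      _ = b ^ |s| * a ^ s := by rw [abs_of_nonneg hs, Real.mul_rpow (by linarith) ha.le]
  · calc x ^ s ≤ a ^ s := Real.rpow_le_rpow_of_nonpos ha hax hs
      _ ≤ b ^ |s| * a ^ s :=
        le_mul_of_one_le_left (by positivity) (Real.one_le_rpow hb (abs_nonneg s))

lemma iUnion_Ioc_pow_eq_Ioi_one {b : ℕ} (hb : 1 < b) :
    ⋃ k : ℕ, Ioc (b ^ k) (b ^ (k + 1)) = Ioi 1 := by
  simpa using iUnion_Ioc_map_succ_eq_Ioi (f := fun k : ℕ ↦ b ^ k)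
    (fun k ↦ by simpa using Nat.one_le_pow k b (by omega))
    (Filter.not_bddAbove_of_tendsto_atTop (tendsto_pow_atTop_atTop_of_one_lt hb))

lemma tsum_Ioc_rpow_mul_le (a : ℕ → ℝ≥0∞) {N : ℕ} (hN : 0 < N) (b : ℕ) (s : ℝ) :
    ∑' n : Ioc N (b * N), ENNReal.ofReal ((n : ℝ) ^ s) * a n ≤
      ENNReal.ofReal ((b : ℝ) ^ |s| * (N : ℝ) ^ s) * ∑' n : Ioi N, a n :=
  calc ∑' n : Ioc N (b * N), ENNReal.ofReal ((n : ℝ) ^ s) * a n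
      ≤ ∑' n : Ioc N (b * N), ENNReal.ofReal ((b : ℝ) ^ |s| * (N : ℝ) ^ s) * a n := by
        refine ENNReal.tsum_le_tsum fun ⟨n, hNn, hnb⟩ ↦ ?_
        gcongr
        exact rpow_le_rpow_abs_mul_rpow (by exact_mod_cast hN) (by exact_mod_cast hNn.le)
          (by exact_mod_cast hnb) s
    _ ≤ ENNReal.ofReal ((b : ℝ) ^ |s| * (N : ℝ) ^ s) * ∑' n : Ioi N, a n := by
        rw [ENNReal.tsum_mul_left]
        gcongr
        exact ENNReal.tsum_mono_subtype a Ioc_subset_Ioi_self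

lemma tsum_Ioc_two_pow_rpow_mul_le {a : ℕ → ℝ≥0∞} {C β : ℝ}
    (ha : ∀ N : ℕ, 1 ≤ N → ∑' n : Ioi N, a n ≤ ENNReal.ofReal (C * (N : ℝ) ^ (-β)))
    (s : ℝ) (k : ℕ) :
    ∑' n : Ioc (2 ^ k) (2 ^ (k + 1)), ENNReal.ofReal ((n : ℝ) ^ s) * a n ≤
      ENNReal.ofReal (2 ^ |s| * C * (2 ^ (s - β)) ^ k) := by
  have hpow : ((2 ^ k : ℕ) : ℝ) ^ s * ((2 ^ k : ℕ) : ℝ) ^ (-β) = (2 ^ (s - β)) ^ k := by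
    rw [← Real.rpow_add (by positivity), ← sub_eq_add_neg, Nat.cast_pow, Nat.cast_ofNat,
      Real.rpow_pow_comm zero_le_two]
  calc ∑' n : Ioc (2 ^ k) (2 ^ (k + 1)), ENNReal.ofReal ((n : ℝ) ^ s) * a n
      ≤ ENNReal.ofReal (2 ^ |s| * ((2 ^ k : ℕ) : ℝ) ^ s) * ∑' n : Ioi (2 ^ k), a n := by
        rw [pow_succ']
        exact tsum_Ioc_rpow_mul_le a (by positivity) 2 s
    _ ≤ ENNReal.ofReal (2 ^ |s| * ((2 ^ k : ℕ) : ℝ) ^ s) *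
          ENNReal.ofReal (C * ((2 ^ k : ℕ) : ℝ) ^ (-β)) := by
        gcongr
        exact ha _ Nat.one_le_two_pow
    _ = ENNReal.ofReal (2 ^ |s| * C * (2 ^ (s - β)) ^ k) := by
        rw [← ENNReal.ofReal_mul (by positivity), mul_mul_mul_comm, hpow]

lemma tsum_Ioi_one_rpow_mul_lt_top_of_tsum_Ioi_le {a : ℕ → ℝ≥0∞} {C β s : ℝ} (hs : s < β)
    (ha : ∀ N : ℕ, 1 ≤ N → ∑' n : Ioi N, a n ≤ ENNReal.ofReal (C * (N : ℝ) ^ (-β))) :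
    ∑' n : Ioi 1, ENNReal.ofReal ((n : ℝ) ^ s) * a n < ⊤ := by
  have hratio : (2 : ℝ) ^ (s - β) < 1 :=
    Real.rpow_lt_one_of_one_lt_of_neg one_lt_two (sub_neg.mpr hs)
  have hgeom : Summable fun k : ℕ ↦ 2 ^ |s| * C * ((2 : ℝ) ^ (s - β)) ^ k :=
    (summable_geometric_of_lt_one (by positivity) hratio).mul_left _
  calc ∑' n : Ioi 1, ENNReal.ofReal ((n : ℝ) ^ s) * a n
      = ∑' n : ⋃ k : ℕ, Ioc (2 ^ k) (2 ^ (k + 1)), ENNReal.ofReal ((n : ℝ) ^ s) * a n := by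
        rw [iUnion_Ioc_pow_eq_Ioi_one one_lt_two]
    _ ≤ ∑' k : ℕ, ∑' n : Ioc (2 ^ k) (2 ^ (k + 1)), ENNReal.ofReal ((n : ℝ) ^ s) * a n :=
        ENNReal.tsum_iUnion_le_tsum (fun n : ℕ ↦ ENNReal.ofReal ((n : ℝ) ^ s) * a n) _
    _ ≤ ∑' k : ℕ, ENNReal.ofReal (2 ^ |s| * C * (2 ^ (s - β)) ^ k) :=
        ENNReal.tsum_le_tsum (tsum_Ioc_two_pow_rpow_mul_le ha s)
    _ < ⊤ := hgeom.tsum_ofReal_lt_top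

lemma tsum_rpow_mul_le_of_le_rpow_neg_mul {a b : ℕ → ℝ≥0∞} {S : Set ℕ} (hS : 0 ∉ S) {C p : ℝ}
    (hba : ∀ n ∈ S, b n ≤ ENNReal.ofReal (C * (n : ℝ) ^ (-p)) * a n) (s : ℝ) :
    ∑' n : S, ENNReal.ofReal ((n : ℝ) ^ s) * b n ≤
      ENNReal.ofReal C * ∑' n : S, ENNReal.ofReal ((n : ℝ) ^ (s - p)) * a n := by
  rw [← ENNReal.tsum_mul_left]
  refine ENNReal.tsum_le_tsum fun ⟨n, hnS⟩ ↦ ?_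
  have hn : (0 : ℝ) < n := by exact_mod_cast Nat.pos_of_ne_zero (ne_of_mem_of_not_mem hnS hS)
  calc ENNReal.ofReal ((n : ℝ) ^ s) * b n
      ≤ ENNReal.ofReal ((n : ℝ) ^ s) * (ENNReal.ofReal (C * (n : ℝ) ^ (-p)) * a n) := by
        gcongr
        exact hba n hnS
    _ = ENNReal.ofReal C * (ENNReal.ofReal ((n : ℝ) ^ (s - p)) * a n) := by
        rw [sub_eq_add_neg, Real.rpow_add hn, ENNReal.ofReal_mul' (by positivity),
          ENNReal.ofReal_mul (by positivity)]
        ring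

lemma tsum_pnat_le_add_tsum_Ioi_one (a : ℕ → ℝ≥0∞) :
    ∑' n : ℕ+, a n ≤ a 1 + ∑' n : Ioi 1, a n :=
  calc ∑' n : ℕ+, a n ≤ ∑' n : ({1} ∪ Ioi 1 : Set ℕ), a n :=
        ENNReal.tsum_mono_subtype a (s := Ioi 0) fun n hn ↦ (Nat.succ_le_of_lt hn).eq_or_lt'
    _ ≤ ∑' n : ({1} : Set ℕ), a n + ∑' n : Ioi 1, a n := ENNReal.tsum_union_le a _ _
    _ = a 1 + ∑' n : Ioi 1, a n := by rw [tsum_singleton 1 a]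

end Series

section Floor

variable {X : Type*} [MeasurableSpace X] {μ : Measure X} {τ : X → ℝ}

lemma tsum_Ioi_measure_floor_eq_le (hτ : AEMeasurable τ μ) (N : ℕ) :
    ∑' n : Set.Ioi N, μ {x | ⌊τ x⌋ = (n : ℤ)} ≤ μ {x | (N : ℝ) < τ x} := by
  have hmeas (n : Set.Ioi N) : NullMeasurableSet {x | ⌊τ x⌋ = (n : ℤ)} μ :=
    (Int.measurable_floor.comp_aemeasurable hτ).nullMeasurableSet_preimage
      (measurableSet_singleton _)
  have hdisj : Pairwise fun m n : Set.Ioi N ↦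
      AEDisjoint μ {x | ⌊τ x⌋ = (m : ℤ)} {x | ⌊τ x⌋ = (n : ℤ)} := fun m n hmn ↦
    (Set.disjoint_left.mpr fun x (hm : ⌊τ x⌋ = m) (hn : ⌊τ x⌋ = n) ↦
      hmn (Subtype.ext (by exact_mod_cast hm.symm.trans hn))).aedisjoint
  refine (tsum_meas_le_meas_iUnion_of_disjoint₀ μ hmeas hdisj).trans
    (measure_mono (Set.iUnion_subset ?_))
  rintro ⟨n, hNn⟩ x (hx : ⌊τ x⌋ = (n : ℤ))
  calc (N : ℝ) < n := by exact_mod_cast hNn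
    _ ≤ τ x := by simpa [hx] using Int.floor_le (τ x)

lemma tsum_Ioi_one_rpow_mul_measure_floor_eq_lt_top (hτ : AEMeasurable τ μ) {C β s : ℝ}
    (hs : s < β)
    (htail : ∀ t : ℝ, 1 ≤ t → μ {x | t < τ x} ≤ ENNReal.ofReal (C * t ^ (-β))) :
    ∑' n : Set.Ioi 1, ENNReal.ofReal ((n : ℝ) ^ s) * μ {x | ⌊τ x⌋ = (n : ℤ)} < ⊤ :=
  tsum_Ioi_one_rpow_mul_lt_top_of_tsum_Ioi_le (a := fun n ↦ μ {x | ⌊τ x⌋ = (n : ℤ)}) hs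
    fun N hN ↦ (tsum_Ioi_measure_floor_eq_le hτ N).trans (htail N (by exact_mod_cast hN))

theorem stmt18_general (hτ : AEMeasurable τ μ) {C₁ C₂ β β' p : ℝ}
    (htail : ∀ t : ℝ, 1 ≤ t → μ {x | t < τ x} ≤ ENNReal.ofReal (C₁ * t ^ (-β)))
    {E : ℕ → Set X} (hE₁ : μ (E 1) ≠ ⊤)
    (hE : ∀ n : ℕ, 2 ≤ n →
      μ (E n) ≤ ENNReal.ofReal (C₂ * (n : ℝ) ^ (-p)) * μ {x | ⌊τ x⌋ = (n : ℤ)})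
    (hβ' : β' < β + p) :
    ∑' n : ℕ+, ENNReal.ofReal ((n : ℝ) ^ β') * μ (E n) < ⊤ := by
  have hfloor :
      ∑' n : Set.Ioi 1, ENNReal.ofReal ((n : ℝ) ^ (β' - p)) * μ {x | ⌊τ x⌋ = (n : ℤ)} < ⊤ :=
    tsum_Ioi_one_rpow_mul_measure_floor_eq_lt_top hτ (sub_lt_iff_lt_add.mpr hβ') htail
  have htwo : ∑' n : Set.Ioi 1, ENNReal.ofReal ((n : ℝ) ^ β') * μ (E n) < ⊤ :=
    (tsum_rpow_mul_le_of_le_rpow_neg_mul (S := Set.Ioi 1) (a := fun n ↦ μ {x | ⌊τ x⌋ = (n : ℤ)})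
      (b := fun n ↦ μ (E n)) (by simp) hE β').trans_lt
      (ENNReal.mul_lt_top ENNReal.ofReal_lt_top hfloor)
  have hone : ENNReal.ofReal (((1 : ℕ) : ℝ) ^ β') * μ (E 1) < ⊤ :=
    ENNReal.mul_lt_top ENNReal.ofReal_lt_top hE₁.lt_top
  exact (tsum_pnat_le_add_tsum_Ioi_one fun n ↦ ENNReal.ofReal ((n : ℝ) ^ β') * μ (E n)).trans_lt
    (ENNReal.add_lt_top.mpr ⟨hone, htwo⟩)

end Floor

theorem stmt18 {X : Type*} [MeasurableSpace X] (μ : Measure X) [IsFiniteMeasure μ]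
    (f : X → X) (hf : Measurable f) (τ₀ : X → ℝ) (hτ₀ : Measurable τ₀)
    (dstar q : ℝ) (hdstar : 0 < dstar) (hq : q ∈ Set.Ioo (0:ℝ) 1)
    (C₁ β : ℝ) (hC₁ : 0 < C₁) (hβ : β ∈ Set.Ioo (0:ℝ) 1)
    (htail : ∀ t : ℝ, 1 ≤ t → μ {x | t < τ₀ x} ≤ ENNReal.ofReal (C₁ * t ^ (-β)))
    (C₂ p : ℝ) (hC₂ : 0 < C₂) (hp : p ∈ Set.Ioo (0:ℝ) 1)
    (hXq : ∀ n : ℕ, 1 ≤ n →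
      μ (Xq f τ₀ dstar q n) ≤
        ENNReal.ofReal (C₂ * (n : ℝ) ^ (-p)) * μ {x | ⌊τ₀ x⌋ = (n : ℤ)}) :
    ∀ β' ∈ Set.Ioo β (β + p),
      (∑' n : ℕ, ENNReal.ofReal ((n : ℝ) ^ β') * μ (Xq f τ₀ dstar q n)) < ⊤ := by
  rintro β' ⟨hββ', hβ'⟩
  rw [← tsum_pnat_eq_tsum_of_eq_zero (by simp [Real.zero_rpow (hβ.1.trans hββ').ne'])]
  exact stmt18_general hτ₀.aemeasurable htail (measure_ne_top μ _)
    (fun n hn ↦ hXq n (one_le_two.trans hn)) hβ'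
end
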